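/- For every x and r > 0 such that the closed ball B̄_x(r') ⊆ Ω for all r' in a neighborhood of r, the function r ↦ D_φ(x,r) is differentiable at r and ∂_r D_φ(x,r) = (2/r) D_φ(x,r) + (2/r²) E_φ(x,r). -/

import Mathlib

open Metric MeasureTheory
open scoped RealInnerProductSpace

noncomputable section

abbrev E4 := EuclideanSpace ℝ (Fin 4)

variable {E : Type*} [NormedAddCommGroup E] [InnerProductSpace ℝ E] [FiniteDimensional ℝ E]

/-- `u` is smooth and harmonic (the Laplacian, i.e. the sum of the pure second
derivatives in the coordinate directions, vanishes) on `Ω`. -/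
def IsHarmonicOn (u : E4 → E) (Ω : Set E4) : Prop :=
  ContDiffOn ℝ (⊤ : ℕ∞) u Ω ∧
  ∀ x ∈ Ω, ∑ i : Fin 4,
    iteratedFDeriv ℝ 2 u x ![EuclideanSpace.single i (1:ℝ), EuclideanSpace.single i 1] = 0

/-- `|∇u(y)|²`, the squared Frobenius norm of the derivative of `u` at `y`. -/
def gradSq (u : E4 → E) (y : E4) : ℝ :=
  ∑ i : Fin 4, ‖fderiv ℝ u y (EuclideanSpace.single i (1:ℝ))‖ ^ 2

/-- `D_φ(x,r) = ∫ |∇u(y)|² φ(|y−x|/r) dy`. -/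
def Dphi (φ : ℝ → ℝ) (u : E4 → E) (x : E4) (r : ℝ) : ℝ :=
  ∫ y, gradSq u y * φ (‖y - x‖ / r)

/-- `H_φ(x,r) = −∫ |u(y)|² |y−x|⁻¹ φ'(|y−x|/r) dy`. -/
def Hphi (φ : ℝ → ℝ) (u : E4 → E) (x : E4) (r : ℝ) : ℝ :=
  -∫ y, ‖u y‖ ^ 2 * ‖y - x‖⁻¹ * deriv φ (‖y - x‖ / r)

/-- `E_φ(x,r) = −∫ |∂_{ν_x}u(y)|² |y−x| φ'(|y−x|/r) dy`, where `ν_x(y) = (y−x)/|y−x|`. -/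
def Ephi (φ : ℝ → ℝ) (u : E4 → E) (x : E4) (r : ℝ) : ℝ :=
  -∫ y, ‖fderiv ℝ u y (‖y - x‖⁻¹ • (y - x))‖ ^ 2 * ‖y - x‖ * deriv φ (‖y - x‖ / r)

/-- The smoothed frequency `N_φ(x,r) = r D_φ(x,r) / H_φ(x,r)`. -/
def Nphi (φ : ℝ → ℝ) (u : E4 → E) (x : E4) (r : ℝ) : ℝ :=
  r * Dphi φ u x r / Hphi φ u x r

theorem aux_contDiff_fderiv {v : E4 → E} (hv : ContDiff ℝ (⊤ : ℕ∞) v) :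
    ContDiff ℝ (⊤ : ℕ∞) (fderiv ℝ v) :=
  hv.fderiv_right (by simp)

theorem aux_contDiff_gradSq {v : E4 → E} (hv : ContDiff ℝ (⊤ : ℕ∞) v) :
    ContDiff ℝ (⊤ : ℕ∞) (gradSq v) := by
  unfold gradSq
  refine ContDiff.sum fun i _ => ?_
  exact ((aux_contDiff_fderiv hv).clm_apply contDiff_const).norm_sq ℝ

theorem aux_supp_gradSq {v : E4 → E} (hc : HasCompactSupport v) :
    HasCompactSupport (gradSq v) := by
  refine (hc.fderiv (𝕜 := ℝ)).mono ?_
  intro y hy h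
  apply hy
  simp [gradSq, h]

/-- The Pohozaev vector field. -/
def poh (v : E4 → E) (x : E4) (i : Fin 4) (y : E4) : ℝ :=
  gradSq v y * (y - x) i -
    2 * ⟪fderiv ℝ v y (y - x), fderiv ℝ v y (EuclideanSpace.single i (1:ℝ))⟫

theorem aux_coord_hasFDerivAt (x : E4) (i : Fin 4) (y : E4) :
    HasFDerivAt (fun y : E4 => (y - x) i) (EuclideanSpace.proj i : E4 →L[ℝ] ℝ) y := by
  have := (EuclideanSpace.proj i : E4 →L[ℝ] ℝ).hasFDerivAt (x := y)
  simpa using this.sub_const (x i)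

theorem aux_contDiff_poh {v : E4 → E} (hv : ContDiff ℝ (⊤ : ℕ∞) v) (x : E4) (i : Fin 4) :
    ContDiff ℝ (⊤ : ℕ∞) (poh v x i) := by
  unfold poh
  have h1 : ContDiff ℝ (⊤ : ℕ∞) (fun y : E4 => (y - x) i) := by
    have := (EuclideanSpace.proj i : E4 →L[ℝ] ℝ).contDiff (n := (⊤ : ℕ∞))
    simpa using this.sub (contDiff_const (c := x i))
  have hA := aux_contDiff_fderiv hv
  refine ((aux_contDiff_gradSq hv).mul h1).sub (contDiff_const.mul ?_)
  exact (hA.clm_apply (contDiff_id.sub contDiff_const)).inner ℝ (hA.clm_apply contDiff_const)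

theorem aux_supp_poh {v : E4 → E} (hc : HasCompactSupport v) (x : E4) (i : Fin 4) :
    HasCompactSupport (poh v x i) := by
  refine (hc.fderiv (𝕜 := ℝ)).mono ?_
  intro y hy h
  apply hy
  simp [poh, gradSq, h]

theorem aux_expand (z : E4) : z = ∑ i : Fin 4, z i • EuclideanSpace.single i (1:ℝ) := by
  ext j
  simp [Finset.sum_apply, Pi.single_apply]

theorem aux_fderiv_gradSq {v : E4 → E} (hv : ContDiff ℝ (⊤ : ℕ∞) v) (y w : E4) :
    HasFDerivAt (gradSq v) (fderiv ℝ (gradSq v) y) y ∧ fderiv ℝ (gradSq v) y w = 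
    ∑ j : Fin 4, 2 * ⟪fderiv ℝ v y (EuclideanSpace.single j (1:ℝ)),
      fderiv ℝ (fderiv ℝ v) y w (EuclideanSpace.single j (1:ℝ))⟫ := by
  have hA : HasFDerivAt (fderiv ℝ v) (fderiv ℝ (fderiv ℝ v) y) y :=
    ((aux_contDiff_fderiv hv).differentiable (by simp) y).hasFDerivAt
  have h : HasFDerivAt (gradSq v) _ y := HasFDerivAt.fun_sum (u := Finset.univ) fun (i : Fin 4) _ =>
    (hA.clm_apply (hasFDerivAt_const (EuclideanSpace.single i (1:ℝ)) y)).norm_sq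
  refine ⟨h.differentiableAt.hasFDerivAt, ?_⟩
  rw [h.fderiv]
  simp

theorem aux_div_poh {v : E4 → E} (hv : ContDiff ℝ (⊤ : ℕ∞) v) (x y : E4)
    (hh : ∑ i : Fin 4, fderiv ℝ (fderiv ℝ v) y (EuclideanSpace.single i (1:ℝ))
      (EuclideanSpace.single i (1:ℝ)) = 0) :
    ∑ i : Fin 4, fderiv ℝ (poh v x i) y (EuclideanSpace.single i (1:ℝ)) = 2 * gradSq v y := by
  have hA : HasFDerivAt (fderiv ℝ v) (fderiv ℝ (fderiv ℝ v) y) y :=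
    ((aux_contDiff_fderiv hv).differentiable (by simp) y).hasFDerivAt
  have hsym : ∀ a b, fderiv ℝ (fderiv ℝ v) y a b = fderiv ℝ (fderiv ℝ v) y b a := by
    have : IsSymmSndFDerivAt ℝ v y :=
      hv.contDiffAt.isSymmSndFDerivAt (by simp only [minSmoothness_of_isRCLikeNormedField]; exact WithTop.coe_le_coe.2 le_top)
    exact fun a b => this a b
  have key : ∀ i : Fin 4, fderiv ℝ (poh v x i) y (EuclideanSpace.single i (1:ℝ)) =
      gradSq v y + fderiv ℝ (gradSq v) y ((y - x) i • EuclideanSpace.single i (1:ℝ))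
      - 2 * (⟪fderiv ℝ v y (y - x), fderiv ℝ (fderiv ℝ v) y (EuclideanSpace.single i (1:ℝ))
          (EuclideanSpace.single i (1:ℝ))⟫
        + ⟪fderiv ℝ (fderiv ℝ v) y (y - x) (EuclideanSpace.single i (1:ℝ)),
            fderiv ℝ v y (EuclideanSpace.single i (1:ℝ))⟫
        + ‖fderiv ℝ v y (EuclideanSpace.single i (1:ℝ))‖ ^ 2) := by
    intro i
    have hη : HasFDerivAt (fun y : E4 => y - x) (ContinuousLinearMap.id ℝ E4) y :=
      (hasFDerivAt_id y).sub_const x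
    have h : HasFDerivAt (poh v x i) _ y :=
      ((aux_fderiv_gradSq hv y 0).1.mul (aux_coord_hasFDerivAt x i y)).sub
      (((hA.clm_apply hη).inner ℝ
        (hA.clm_apply (hasFDerivAt_const (EuclideanSpace.single i (1:ℝ)) y))).const_mul 2)
    rw [h.fderiv, hsym (y - x)]
    simp [fderivInnerCLM_apply, inner_add_left]
    ring
  simp only [key, Finset.sum_sub_distrib, Finset.sum_add_distrib, ← Finset.mul_sum, ← map_sum,
    ← aux_expand, ← inner_sum, hh]
  rw [(aux_fderiv_gradSq hv y (y - x)).2]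
  simp only [← Finset.mul_sum, real_inner_comm]
  have : ∑ i : Fin 4, ‖fderiv ℝ v y (EuclideanSpace.single i (1:ℝ))‖ ^ 2 = gradSq v y := rfl
  rw [this]
  simp
  ring


theorem aux_w_near {φ : ℝ → ℝ} (hφ1 : ∀ t ≤ (3/4 : ℝ), φ t = 1)
    (x : E4) {r : ℝ} (hr : 0 < r) :
    (fun y : E4 => φ (‖y - x‖ / r)) =ᶠ[nhds x] fun _ => (1:ℝ) := by
  have : ball x (3/4 * r) ∈ nhds x := ball_mem_nhds x (by positivity)
  filter_upwards [this] with y hy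
  apply hφ1
  rw [mem_ball, dist_eq_norm] at hy
  rw [div_le_iff₀ hr]
  exact hy.le

theorem aux_w_contDiff {φ : ℝ → ℝ} (hφs : ContDiff ℝ (⊤ : ℕ∞) φ)
    (hφ1 : ∀ t ≤ (3/4 : ℝ), φ t = 1)
    (x : E4) {r : ℝ} (hr : 0 < r) :
    ContDiff ℝ (⊤ : ℕ∞) (fun y : E4 => φ (‖y - x‖ / r)) := by
  rw [contDiff_iff_contDiffAt]
  intro y
  by_cases h : y = x
  · subst h
    exact contDiffAt_const.congr_of_eventuallyEq (aux_w_near hφ1 y hr)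
  · refine hφs.contDiffAt.comp y (ContDiffAt.div_const ?_ r)
    exact (contDiffAt_id.sub contDiffAt_const).norm ℝ (sub_ne_zero.2 h)

theorem aux_w_fderiv {φ : ℝ → ℝ} (hφs : ContDiff ℝ (⊤ : ℕ∞) φ)
    (hφ1 : ∀ t ≤ (3/4 : ℝ), φ t = 1)
    (x : E4) {r : ℝ} (hr : 0 < r) (y z : E4) :
    fderiv ℝ (fun y : E4 => φ (‖y - x‖ / r)) y z =
      deriv φ (‖y - x‖ / r) * (‖y - x‖⁻¹ * ⟪y - x, z⟫ / r) := by
  by_cases h : y = x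
  · subst h
    rw [(aux_w_near hφ1 y hr).fderiv_eq]
    simp
  · have hn : ‖y - x‖ ≠ 0 := norm_ne_zero_iff.2 (sub_ne_zero.2 h)
    have hd : DifferentiableAt ℝ (fun y : E4 => ‖y - x‖) y :=
      (differentiableAt_id.sub_const x).norm ℝ (sub_ne_zero.2 h)
    have h1 := hd.hasFDerivAt
    have h2 : HasFDerivAt (fun y : E4 => ‖y - x‖ ^ 2) _ y :=
      ((hasFDerivAt_id y).sub_const x).norm_sq
    have h3 := congrArg (fun L => L z) (h2.unique (h1.pow 2))
    have h4 : fderiv ℝ (fun y : E4 => ‖y - x‖) y z = ‖y - x‖⁻¹ * ⟪y - x, z⟫ := by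
      simp [-inner_sub_left, ← inner_sub_left] at h3
      rw [eq_inv_mul_iff_mul_eq₀ hn]
      rw [inner_sub_left]
      rw [inner_sub_left] at h3
      linarith
    have h5 : HasDerivAt φ (deriv φ (‖y - x‖ / r)) (‖y - x‖ / r) :=
      (hφs.differentiable (by simp) _).hasDerivAt
    have h6 := h5.comp_hasFDerivAt y (h1.mul_const r⁻¹)
    have h7 : HasFDerivAt (fun y : E4 => φ (‖y - x‖ / r)) _ y := h6
    rw [h7.fderiv]
    simp only [ContinuousLinearMap.smul_apply, smul_eq_mul, h4]
    ring

theorem aux_deriv_bdd {φ : ℝ → ℝ} (hφs : ContDiff ℝ (⊤ : ℕ∞) φ)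
    (hφ1 : ∀ t ≤ (3/4 : ℝ), φ t = 1)
    (hφ0 : ∀ t, (1:ℝ) ≤ t → φ t = 0)
    : ∃ C, 0 ≤ C ∧ ∀ t, |deriv φ t| ≤ C := by
  have hc : Continuous (deriv φ) := hφs.continuous_deriv (by simp)
  obtain ⟨C, hC⟩ := (isCompact_Icc (a := (0:ℝ)) (b := 2)).exists_bound_of_continuousOn hc.continuousOn
  refine ⟨C, (norm_nonneg _).trans (hC 0 (by simp)), fun t => ?_⟩
  have hC0 : 0 ≤ C := (norm_nonneg _).trans (hC 0 (by simp))
  by_cases h0 : t < 3/4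
  · have : φ =ᶠ[nhds t] fun _ => (1:ℝ) := by
      filter_upwards [Iio_mem_nhds h0] with s hs using hφ1 s (le_of_lt hs)
    rw [this.deriv_eq]; simpa
  by_cases h1 : 1 < t
  · have : φ =ᶠ[nhds t] fun _ => (0:ℝ) := by
      filter_upwards [Ioi_mem_nhds h1] with s hs using hφ0 s (le_of_lt hs)
    rw [this.deriv_eq]; simpa
  · exact hC t ⟨by linarith, by linarith⟩

theorem aux_deriv_D {φ : ℝ → ℝ} (hφs : ContDiff ℝ (⊤ : ℕ∞) φ)
    (hφ1 : ∀ t ≤ (3/4 : ℝ), φ t = 1)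
    (hφ0 : ∀ t, (1:ℝ) ≤ t → φ t = 0)
    {v : E4 → E} (hv : ContDiff ℝ (⊤ : ℕ∞) v) (hc : HasCompactSupport v)
    (x : E4) {r : ℝ} (hr : 0 < r) :
    HasDerivAt (fun t => Dphi φ v x t)
      (∫ y, gradSq v y * (deriv φ (‖y - x‖ / r) * (-‖y - x‖ / r ^ 2))) r := by
  obtain ⟨C, hC0, hC⟩ := aux_deriv_bdd hφs hφ1 hφ0
  have hg := (aux_contDiff_gradSq hv).continuous
  have hgs := aux_supp_gradSq hc
  have hφc := hφs.continuous
  have hdc : Continuous (deriv φ) := hφs.continuous_deriv (by simp)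
  refine (hasDerivAt_integral_of_dominated_loc_of_deriv_le (s := Set.Ioi (r/2))
    (F := fun t y => gradSq v y * φ (‖y - x‖ / t))
    (F' := fun t y => gradSq v y * (deriv φ (‖y - x‖ / t) * (-‖y - x‖ / t ^ 2)))
    (bound := fun y => gradSq v y * (C * (‖y - x‖ / (r/2) ^ 2)))
    (Ioi_mem_nhds (by linarith)) ?_ ?_ ?_ ?_ ?_ ?_).2
  · refine Filter.Eventually.of_forall fun t => Continuous.aestronglyMeasurable ?_
    fun_prop
  · exact Continuous.integrable_of_hasCompactSupport (by fun_prop) hgs.mul_right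
  · exact Continuous.aestronglyMeasurable (by fun_prop)
  · refine Filter.Eventually.of_forall fun y t ht => ?_
    have ht' : r / 2 < t := ht
    have hg0 : 0 ≤ gradSq v y := Finset.sum_nonneg fun i _ => by positivity
    rw [norm_mul, norm_mul, Real.norm_of_nonneg hg0, norm_div, norm_neg, norm_norm,
      Real.norm_of_nonneg (by positivity : (0:ℝ) ≤ t ^ 2)]
    have := hC (‖y - x‖ / t)
    rw [← Real.norm_eq_abs] at this
    gcongr
  · exact Continuous.integrable_of_hasCompactSupport (by fun_prop) hgs.mul_right
  · refine Filter.Eventually.of_forall fun y t ht => ?_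
    have ht' : r / 2 < t := ht
    have ht0 : t ≠ 0 := by linarith
    have h5 : HasDerivAt φ (deriv φ (‖y - x‖ / t)) (‖y - x‖ / t) :=
      (hφs.differentiable (by simp) _).hasDerivAt
    have h6 : HasDerivAt (fun t => ‖y - x‖ / t) (-‖y - x‖ / t ^ 2) t := by
      have := (hasDerivAt_const t ‖y - x‖).div (hasDerivAt_id t) ht0
      simp only [zero_mul, id, mul_one, zero_sub] at this
      exact this
    exact (h5.comp t h6).const_mul _

theorem aux_main {φ : ℝ → ℝ} (hφs : ContDiff ℝ (⊤ : ℕ∞) φ)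
    (hφ1 : ∀ t ≤ (3/4 : ℝ), φ t = 1)
    (hφ0 : ∀ t, (1:ℝ) ≤ t → φ t = 0)
    {v : E4 → E} (hv : ContDiff ℝ (⊤ : ℕ∞) v) (hc : HasCompactSupport v)
    (x : E4) {r : ℝ} (hr : 0 < r)
    (hh : ∀ y ∈ ball x r, ∑ i : Fin 4, fderiv ℝ (fderiv ℝ v) y (EuclideanSpace.single i (1:ℝ))
      (EuclideanSpace.single i (1:ℝ)) = 0) :
    HasDerivAt (fun t => Dphi φ v x t)
      (2 / r * Dphi φ v x r + 2 / r ^ 2 * Ephi φ v x r) r := by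
  convert aux_deriv_D hφs hφ1 hφ0 hv hc x hr using 1
  have hw := aux_w_contDiff hφs hφ1 x hr
  set w : E4 → ℝ := fun y => φ (‖y - x‖ / r) with hwdef
  have hwc := hw.continuous
  have hwd : Continuous (fderiv ℝ w) := hw.continuous_fderiv (by simp)
  have hi1 : ∀ i : Fin 4, Integrable (fun y => w y *
      fderiv ℝ (poh v x i) y (EuclideanSpace.single i (1:ℝ))) := fun i => by
    have := (aux_contDiff_poh hv x i).continuous_fderiv (by simp)
    refine Continuous.integrable_of_hasCompactSupport (by fun_prop) ?_
    exact ((aux_supp_poh hc x i).fderiv_apply (𝕜 := ℝ) _).mul_left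
  have hi2 : ∀ i : Fin 4, Integrable (fun y => 
      fderiv ℝ w y (EuclideanSpace.single i (1:ℝ)) * poh v x i y) := fun i => by
    have := (aux_contDiff_poh hv x i).continuous
    refine Continuous.integrable_of_hasCompactSupport (by fun_prop) ?_
    exact (aux_supp_poh hc x i).mul_left
  have hibp : ∀ i : Fin 4, ∫ y, w y * fderiv ℝ (poh v x i) y (EuclideanSpace.single i (1:ℝ)) =
      - ∫ y, fderiv ℝ w y (EuclideanSpace.single i (1:ℝ)) * poh v x i y := fun i => by
    refine integral_mul_fderiv_eq_neg_fderiv_mul_of_integrable (hi2 i) (hi1 i) ?_ ?_ ?_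
    · have := (aux_contDiff_poh hv x i).continuous
      exact Continuous.integrable_of_hasCompactSupport (by fun_prop) (aux_supp_poh hc x i).mul_left
    · exact fun y _ => hw.differentiable (by simp) y
    · exact fun y _ => (aux_contDiff_poh hv x i).differentiable (by simp) y
  have hsum := Finset.sum_congr (rfl : (Finset.univ : Finset (Fin 4)) = _) fun i _ => hibp i
  rw [Finset.sum_neg_distrib, ← integral_finsetSum _ fun i _ => hi1 i,
    ← integral_finsetSum _ fun i _ => hi2 i] at hsum
  have hS := integrable_finsetSum Finset.univ fun i _ => hi2 i
  have hL : ∫ y, ∑ i : Fin 4, w y * fderiv ℝ (poh v x i) y (EuclideanSpace.single i (1:ℝ)) =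
      2 * Dphi φ v x r := by
    unfold Dphi
    rw [← integral_const_mul]
    congr 1
    ext y
    rw [← Finset.mul_sum]
    by_cases hy : y ∈ ball x r
    · rw [aux_div_poh hv x y (hh y hy)]
      simp only [hwdef]
      ring
    · have : φ (‖y - x‖ / r) = 0 := by
        apply hφ0
        rw [mem_ball, dist_eq_norm, not_lt] at hy
        rwa [one_le_div hr]
      simp [hwdef, this]
  rw [hL] at hsum
  have hg := (aux_contDiff_gradSq hv).continuous
  have hdc : Continuous (deriv φ) := hφs.continuous_deriv (by simp)
  have ha : Integrable (fun y => gradSq v y * (deriv φ (‖y - x‖ / r) * (-‖y - x‖ / r ^ 2))) :=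
    Continuous.integrable_of_hasCompactSupport (by fun_prop) (aux_supp_gradSq hc).mul_right
  have hE : Ephi φ v x r = (r ^ 2 / 2) * (∫ y, gradSq v y *
      (deriv φ (‖y - x‖ / r) * (-‖y - x‖ / r ^ 2))) + (r / 2) * ∫ y, ∑ i : Fin 4,
      fderiv ℝ w y (EuclideanSpace.single i (1:ℝ)) * poh v x i y := by
    unfold Ephi
    rw [← integral_neg, ← integral_const_mul, ← integral_const_mul,
      ← integral_add (ha.const_mul _) (hS.const_mul _)]
    congr 1
    ext y
    have e1 : ∑ i : Fin 4, fderiv ℝ w y (EuclideanSpace.single i (1:ℝ)) * poh v x i y =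
        deriv φ (‖y - x‖ / r) * (‖y - x‖⁻¹ / r) *
        (gradSq v y * ‖y - x‖ ^ 2 - 2 * ‖fderiv ℝ v y (y - x)‖ ^ 2) := by
      have e2 : ‖y - x‖ ^ 2 = ∑ i : Fin 4, (y - x) i * (y - x) i := by
        rw [EuclideanSpace.norm_sq_eq]
        simp [sq]
      have e3 : ‖fderiv ℝ v y (y - x)‖ ^ 2 = ∑ i : Fin 4, (y - x) i *
          ⟪fderiv ℝ v y (y - x), fderiv ℝ v y (EuclideanSpace.single i (1:ℝ))⟫ := by
        rw [← real_inner_self_eq_norm_sq]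
        conv_lhs => rw [aux_expand (y - x)]
        rw [← aux_expand (y - x)]
        conv_lhs =>
          arg 3
          rw [aux_expand (y - x)]
        rw [map_sum, inner_sum]
        simp only [map_smul, real_inner_smul_right]
      rw [e2, e3, Finset.mul_sum, Finset.mul_sum, ← Finset.sum_sub_distrib, Finset.mul_sum]
      refine Finset.sum_congr rfl fun i _ => ?_
      rw [hwdef, aux_w_fderiv hφs hφ1 x hr, poh, EuclideanSpace.inner_single_right]
      simp only [one_mul, conj_trivial]
      ring
    rw [e1, map_smul, norm_smul, norm_inv, norm_norm]
    by_cases hn : ‖y - x‖ = 0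
    · simp [hn]
    · field_simp
      ring
  rw [hE]
  set I := ∫ y, gradSq v y * (deriv φ (‖y - x‖ / r) * (-‖y - x‖ / r ^ 2))
  have : ∫ y, ∑ i : Fin 4, fderiv ℝ w y (EuclideanSpace.single i (1:ℝ)) * poh v x i y =
    - (2 * Dphi φ v x r) := by linarith
  rw [this]
  field_simp
  ring


theorem aux_cutoff {Ω : Set E4} (hΩ : IsOpen Ω) {u : E4 → E} (hu : ContDiffOn ℝ (⊤ : ℕ∞) u Ω)
    (x : E4) {r R : ℝ} (hr : 0 < r) (hR : r < R) (hb : closedBall x R ⊆ Ω) :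
    ∃ v : E4 → E, ContDiff ℝ (⊤ : ℕ∞) v ∧ HasCompactSupport v ∧
      ∀ y ∈ ball x r, v =ᶠ[nhds y] u := by
  let f : ContDiffBump x := ⟨r, R, hr, hR⟩
  refine ⟨fun y => f y • u y, ?_, f.hasCompactSupport.smul_right, ?_⟩
  · rw [contDiff_iff_contDiffAt]
    intro y
    by_cases hy : y ∈ Ω
    · exact f.contDiffAt.smul (hu.contDiffAt (hΩ.mem_nhds hy))
    · have : y ∉ tsupport f := fun h => hy (hb (by rwa [f.tsupport_eq] at h))
      refine (contDiffAt_const (c := (0:E))).congr_of_eventuallyEq ?_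
      filter_upwards [notMem_tsupport_iff_eventuallyEq.1 this] with z hz
      simp [hz]
  · intro y hy
    filter_upwards [f.eventuallyEq_one_of_mem_ball hy] with z hz
    simp [hz]

/-- Flat-case identity (4.2): `∂_r D_φ(x,r) = (2/r) D_φ(x,r) + (2/r²) E_φ(x,r)`. -/
theorem stmt_8 (φ : ℝ → ℝ) (hφs : ContDiff ℝ (⊤ : ℕ∞) φ) (hφa : Antitone φ)
    (hφ1 : ∀ t ≤ (3/4 : ℝ), φ t = 1) (hφ0 : ∀ t, (1:ℝ) ≤ t → φ t = 0)
    (Ω : Set E4) (hΩ : IsOpen Ω) (u : E4 → E) (hu : IsHarmonicOn u Ω)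
    (x : E4) (r : ℝ) (hr : 0 < r)
    (hball : ∀ᶠ r' in nhds r, closedBall x r' ⊆ Ω) :
    HasDerivAt (fun t => Dphi φ u x t)
      (2 / r * Dphi φ u x r + 2 / r ^ 2 * Ephi φ u x r) r := by
  obtain ⟨ε, hε, hb⟩ := Metric.eventually_nhds_iff.1 hball
  have hb1 : closedBall x (r + ε / 2) ⊆ Ω := hb (by
    rw [Real.dist_eq, add_sub_cancel_left, abs_of_pos (by positivity)]; linarith)
  obtain ⟨v, hv, hvc, hvu⟩ := aux_cutoff hΩ hu.1 x (r := r + ε / 4) (R := r + ε / 2)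
    (by positivity) (by linarith) hb1
  have hD : ∀ t, 0 < t → t < r + ε / 4 → Dphi φ u x t = Dphi φ v x t := by
    intro t ht0 ht
    unfold Dphi
    congr 1
    ext y
    by_cases hy : y ∈ ball x (r + ε / 4)
    · simp only [gradSq, (hvu y hy).fderiv_eq]
    · rw [mem_ball, dist_eq_norm, not_lt] at hy
      rw [hφ0 (‖y - x‖ / t) (by rw [one_le_div ht0]; linarith)]
      simp
  have hE : Ephi φ u x r = Ephi φ v x r := by
    unfold Ephi
    congr 2
    ext y
    by_cases hy : y ∈ ball x (r + ε / 4)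
    · simp only [(hvu y hy).fderiv_eq]
    · rw [mem_ball, dist_eq_norm, not_lt] at hy
      have h1 : 1 < ‖y - x‖ / r := by rw [one_lt_div hr]; linarith
      have h2 : φ =ᶠ[nhds (‖y - x‖ / r)] fun _ => (0:ℝ) := by
        filter_upwards [Ioi_mem_nhds h1] with s hs using hφ0 s (le_of_lt hs)
      rw [h2.deriv_eq]
      simp
  have hm := aux_main hφs hφ1 hφ0 hv hvc x hr (by
    intro y hy
    have hy' : y ∈ ball x (r + ε / 4) := ball_subset_ball (by linarith) hy
    have hyΩ : y ∈ Ω := hb1 (ball_subset_closedBall (ball_subset_ball (by linarith) hy))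
    have h := hu.2 y hyΩ
    simp only [iteratedFDeriv_two_apply] at h
    have h3 : fderiv ℝ (fderiv ℝ v) y = fderiv ℝ (fderiv ℝ u) y := (hvu y hy').fderiv.fderiv_eq
    rw [h3]
    simpa using h)
  rw [hD r hr (by linarith), hE]
  refine hm.congr_of_eventuallyEq ?_
  filter_upwards [Ioi_mem_nhds hr, Iio_mem_nhds (show r < r + ε / 4 by linarith)] with t h1 h2
  exact hD t h1 h2
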